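/- Equality in ℳ is decidable: for all morphism terms g₁, g₂ in ℳ, g₁ = g₂ is derivable from the 𝒦_{Φ,Ψ}-equations if and only if D(CF(g₁)) ≡ D(CF(g₂)), where CF(g) is the unique CF normal form of g and D(h) the unique D normal form of h. -/

import Mathlib

open CategoryTheory

universe u v

namespace GDin

/-! ### Graphs in the sense of the paper -/

/-- Vertices of a graph with `m` left-hand argument places, `n` right-hand argument
places and `g` auxiliary `G`-vertices. -/
abbrev Vtx (m n g : ℕ) := (Fin m ⊕ Fin n) ⊕ Fin g

/-- The "same component" relation generated by a set of edges. -/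
def Conn {V : Type*} (E : V → V → Prop) : V → V → Prop := Relation.EqvGen E

/-- A graph in the sense of the paper.  The sign (variance) functions `sL` (for the
left-hand argument places `x₁,…,x_m`) and `sR` (for the right-hand argument places
`y₁,…,y_n`) are parameters; `true` means positive (covariant), `false` negative.
The structure also carries the number `k` of connected components together with the
component classifier `π`. -/
structure GGraph (m n g : ℕ) (sL : Fin m → Bool) (sR : Fin n → Bool) : Type where
  edge : Vtx m n g → Vtx m n g → Prop
  symm : ∀ u v, edge u v → edge v u
  /-- condition 1: every vertex belongs to some edge -/
  covered : ∀ v, ∃ w, edge v w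
  /-- condition 2: an edge joins two left-hand argument places iff they have opposite
  signs and lie in the same component -/
  condX : ∀ i j : Fin m, edge (.inl (.inl i)) (.inl (.inl j)) ↔
    (sL i = !sL j ∧ Conn edge (.inl (.inl i)) (.inl (.inl j)))
  /-- condition 3 -/
  condY : ∀ i j : Fin n, edge (.inl (.inr i)) (.inl (.inr j)) ↔
    (sR i = !sR j ∧ Conn edge (.inl (.inr i)) (.inl (.inr j)))
  /-- condition 4 -/
  condXY : ∀ (i : Fin m) (j : Fin n), edge (.inl (.inl i)) (.inl (.inr j)) ↔
    (sL i = sR j ∧ Conn edge (.inl (.inl i)) (.inl (.inr j)))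
  /-- condition 5, first half: if a component contains an edge between two argument
  places then it contains no `G`-vertex -/
  condG₁ : ∀ v : Vtx m n g,
    (∃ u w : Fin m ⊕ Fin n, Conn edge (.inl u) v ∧ edge (.inl u) (.inl w)) →
      ∀ a : Fin g, ¬ Conn edge (.inr a) v
  /-- condition 5, second half: otherwise the component contains exactly one
  `G`-vertex -/
  condG₂ : ∀ v : Vtx m n g,
    (¬ ∃ u w : Fin m ⊕ Fin n, Conn edge (.inl u) v ∧ edge (.inl u) (.inl w)) →
      ∃! a : Fin g, Conn edge (.inr a) v
  /-- condition 5: every other vertex of such a component is joined to the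
  `G`-vertex by an edge -/
  condG₃ : ∀ (a : Fin g) (u : Fin m ⊕ Fin n),
    Conn edge (.inl u) (.inr a) → edge (.inl u) (.inr a)
  /-- the number of components -/
  k : ℕ
  /-- the component classifier -/
  π : Vtx m n g → Fin k
  π_surj : Function.Surjective π
  π_eq : ∀ u v, π u = π v ↔ Conn edge u v

namespace GGraph

variable {m n g : ℕ} {sL : Fin m → Bool} {sR : Fin n → Bool}

/-- component of the `i`-th left-hand argument place -/
def πL (Γ : GGraph m n g sL sR) (i : Fin m) : Fin Γ.k := Γ.π (.inl (.inl i))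

/-- component of the `j`-th right-hand argument place -/
def πR (Γ : GGraph m n g sL sR) (j : Fin n) : Fin Γ.k := Γ.π (.inl (.inr j))

end GGraph

/-! ### Variance-indexed categories and g-dinaturality -/

/-- `B` or `Bᵒᵖ` according to a variance. -/
def VarCat (B : Type u) [Category.{v} B] : Bool → Type u
  | true => B
  | false => Bᵒᵖ

instance (B : Type u) [Category.{v} B] : ∀ b, Category.{v} (VarCat B b)
  | true => (inferInstance : Category B)
  | false => (inferInstance : Category Bᵒᵖ)

variable {B : Type u} [Category.{v} B]

/-- The object of `B` or `Bᵒᵖ` with `P` at a positive argument place and `N` at a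
negative one. -/
def pairObj : (b : Bool) → B → B → VarCat B b
  | true, P, _ => P
  | false, _, N => Opposite.op N

/-- The morphism with `u` at a positive argument place and `v` (contravariantly) at a
negative one. -/
def pairHom : (b : Bool) → {P P' N N' : B} → (P ⟶ P') → (N' ⟶ N) →
    (pairObj b P N ⟶ pairObj b P' N')
  | true, _, _, _, _, u, _ => u
  | false, _, _, _, _, _, v => v.op

variable {ι : Type} {k : ℕ}

/-- The tuple of objects `⟨u,v⟩` with `u` in all positive and `v` in all negative
argument places. -/
@[reducible] def tupObj (s : ι → Bool) (P N : B) : ∀ i, VarCat B (s i) :=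
  fun i => pairObj (s i) P N

/-- The corresponding tuple of morphisms. -/
def tupHom (s : ι → Bool) {P P' N N' : B} (u : P ⟶ P') (v : N' ⟶ N) :
    (tupObj s P N ⟶ tupObj s P' N') :=
  fun i => pairHom (s i) u v

/-- The diagonal-like tuple of objects determined by an assignment of objects to
the components of a graph. -/
@[reducible] def diagObj (s : ι → Bool) (pl : ι → Fin k) (A : Fin k → B) :
    ∀ i, VarCat B (s i) :=
  fun i => pairObj (s i) (A (pl i)) (A (pl i))

/-- The tuple of objects obtained from the component assignment `A` by replacing the
value of component `c` by `P` at positive and `N` at negative argument places. -/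
def hexObj (s : ι → Bool) (pl : ι → Fin k) (c : Fin k) (A : Fin k → B) (P N : B) :
    ∀ i, VarCat B (s i) :=
  fun i => if pl i = c then pairObj (s i) P N else pairObj (s i) (A (pl i)) (A (pl i))

/-- The corresponding tuple of morphisms (identities outside component `c`). -/
def hexHom (s : ι → Bool) (pl : ι → Fin k) (c : Fin k) (A : Fin k → B)
    {P P' N N' : B} (u : P ⟶ P') (v : N' ⟶ N) :
    (hexObj s pl c A P N ⟶ hexObj s pl c A P' N') :=
  fun i => by
    unfold hexObj
    by_cases h : pl i = c
    · simp only [if_pos h]; exact pairHom (s i) u v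
    · simp only [if_neg h]; exact 𝟙 _

/-- update of a component assignment -/
def updF {γ : Type*} (A : Fin k → γ) (c : Fin k) (X : γ) : Fin k → γ :=
  fun j => if j = c then X else A j

theorem diag_upd (s : ι → Bool) (pl : ι → Fin k) (c : Fin k) (A : Fin k → B) (X : B) :
    diagObj s pl (updF A c X) = hexObj s pl c A X X := by
  funext i
  unfold diagObj hexObj updF
  by_cases h : pl i = c <;> simp [h]

/-- g-dinaturality of a transformation with respect to a graph: in every component
and for every morphism `f : P ⟶ Q` (all other components being kept fixed), the
g-dinaturality hexagon commutes. -/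
def IsGDin {m n gΓ : ℕ} {sL : Fin m → Bool} {sR : Fin n → Bool}
    (Γ : GGraph m n gΓ sL sR)
    (T : (∀ i : Fin m, VarCat B (sL i)) ⥤ B)
    (S : (∀ j : Fin n, VarCat B (sR j)) ⥤ B)
    (α : ∀ A : Fin Γ.k → B, T.obj (diagObj sL Γ.πL A) ⟶ S.obj (diagObj sR Γ.πR A)) :
    Prop :=
  ∀ (c : Fin Γ.k) (A : Fin Γ.k → B) (P Q : B) (f : P ⟶ Q),
    T.map (hexHom sL Γ.πL c A f (𝟙 Q)) ≫
      eqToHom (congrArg T.obj (diag_upd sL Γ.πL c A Q).symm) ≫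
      α (updF A c Q) ≫
      eqToHom (congrArg S.obj (diag_upd sR Γ.πR c A Q)) ≫
      S.map (hexHom sR Γ.πR c A (𝟙 Q) f)
    = T.map (hexHom sL Γ.πL c A (𝟙 P) f) ≫
      eqToHom (congrArg T.obj (diag_upd sL Γ.πL c A P).symm) ≫
      α (updF A c P) ≫
      eqToHom (congrArg S.obj (diag_upd sR Γ.πR c A P)) ≫
      S.map (hexHom sR Γ.πR c A f (𝟙 P))

/-- The g-dinaturality hexagon for a transformation whose graph has a single
component (so that only the signs of the argument places matter). -/
def SingleHex {ιx ιz : Type} (sx : ιx → Bool) (sz : ιz → Bool)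
    (F : (∀ i : ιx, VarCat B (sx i)) ⥤ B) (H : (∀ l : ιz, VarCat B (sz l)) ⥤ B)
    (φ : ∀ A : B, F.obj (tupObj sx A A) ⟶ H.obj (tupObj sz A A)) : Prop :=
  ∀ (P Q : B) (f : P ⟶ Q),
    F.map (tupHom sx f (𝟙 Q)) ≫ φ Q ≫ H.map (tupHom sz (𝟙 Q) f)
    = F.map (tupHom sx (𝟙 P) f) ≫ φ P ≫ H.map (tupHom sz f (𝟙 P))


/-! ### The free category `𝒟` of the equational class `𝒦_{Φ,Ψ}` -/

/-- Objects of `𝒟`: freely generated over `{A, C}` by an `m`-ary operation `T`,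
an `n`-ary operation `S` and a `p`-ary operation `R`. -/
inductive DObj (m n p : ℕ) : Type
  | A : DObj m n p
  | C : DObj m n p
  | T : (Fin m → DObj m n p) → DObj m n p
  | S : (Fin n → DObj m n p) → DObj m n p
  | R : (Fin p → DObj m n p) → DObj m n p

/-- source of a functor argument according to its variance -/
abbrev dSrc {γ : Type*} (b : Bool) (X Y : γ) : γ := cond b X Y
/-- target of a functor argument according to its variance -/
abbrev dTgt {γ : Type*} (b : Bool) (X Y : γ) : γ := cond b Y X

section DD

variable {m n p gΦ gΨ : ℕ} {sx : Fin m → Bool} {sy : Fin n → Bool} {sz : Fin p → Bool}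

/-- Morphism terms of the category `𝒟`, generated from `f : A → C`, the identities,
the generic g-dinatural transformations `α`, `β` and the operations `T`, `S`, `R`
(contravariant in their negative argument places). -/
inductive DTerm (Φ : GGraph m n gΦ sx sy) (Ψ : GGraph n p gΨ sy sz) :
    DObj m n p → DObj m n p → Type
  | f : DTerm Φ Ψ .A .C
  | id (X : DObj m n p) : DTerm Φ Ψ X X
  /-- composition, written in diagrammatic order -/
  | comp {X Y Z} : DTerm Φ Ψ X Y → DTerm Φ Ψ Y Z → DTerm Φ Ψ X Z
  | alpha (W : Fin Φ.k → DObj m n p) :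
      DTerm Φ Ψ (.T fun i => W (Φ.πL i)) (.S fun j => W (Φ.πR j))
  | beta (W : Fin Ψ.k → DObj m n p) :
      DTerm Φ Ψ (.S fun j => W (Ψ.πL j)) (.R fun l => W (Ψ.πR l))
  | mapT {X Y : Fin m → DObj m n p} :
      (∀ i, DTerm Φ Ψ (dSrc (sx i) (X i) (Y i)) (dTgt (sx i) (X i) (Y i))) →
      DTerm Φ Ψ (.T X) (.T Y)
  | mapS {X Y : Fin n → DObj m n p} :
      (∀ j, DTerm Φ Ψ (dSrc (sy j) (X j) (Y j)) (dTgt (sy j) (X j) (Y j))) →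
      DTerm Φ Ψ (.S X) (.S Y)
  | mapR {X Y : Fin p → DObj m n p} :
      (∀ l, DTerm Φ Ψ (dSrc (sz l) (X l) (Y l)) (dTgt (sz l) (X l) (Y l))) →
      DTerm Φ Ψ (.R X) (.R Y)

variable {Φ : GGraph m n gΦ sx sy} {Ψ : GGraph n p gΨ sy sz}

/-- composition of functor arguments, respecting variance -/
def dComp {X Y Z : DObj m n p} : (b : Bool) →
    DTerm Φ Ψ (dSrc b X Y) (dTgt b X Y) → DTerm Φ Ψ (dSrc b Y Z) (dTgt b Y Z) →
    DTerm Φ Ψ (dSrc b X Z) (dTgt b X Z)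
  | true, g, h => .comp g h
  | false, g, h => .comp h g

/-- identity as a functor argument -/
def dId (X : DObj m n p) : (b : Bool) → DTerm Φ Ψ (dSrc b X X) (dTgt b X X)
  | true => .id X
  | false => .id X

/-- the object tuple with `P` at the positive and `N` at the negative argument
places of component `i`, and the parameter `Z` elsewhere -/
def mixT {q k : ℕ} (pl : Fin q → Fin k) (s : Fin q → Bool) (i : Fin k)
    (Z : Fin k → DObj m n p) (P N : DObj m n p) : Fin q → DObj m n p :=
  fun j => if pl j = i then (cond (s j) P N) else Z (pl j)

section vecs
variable {q k : ℕ} (pl : Fin q → Fin k) (s : Fin q → Bool) (i : Fin k)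
  (Z : Fin k → DObj m n p) {X Y : DObj m n p} (t : DTerm Φ Ψ X Y)

/-- the argument vector `g` of the equation (α) (left-hand side, source functor):
`t` at the positive and `1_Y` at the negative argument places of component `i`,
identities elsewhere -/
def vecA : ∀ j, DTerm Φ Ψ (dSrc (s j) (mixT pl s i Z X Y j) (updF Z i Y (pl j)))
    (dTgt (s j) (mixT pl s i Z X Y j) (updF Z i Y (pl j))) := fun j => by
  unfold mixT updF
  by_cases h : pl j = i
  · simp only [if_pos h]
    cases hs : s j
    · exact .id Y
    · exact t
  · simp only [if_neg h]
    exact dId (Z (pl j)) (s j)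

/-- the argument vector `h` of the equation (α) (left-hand side, target functor) -/
def vecB : ∀ j, DTerm Φ Ψ (dSrc (s j) (updF Z i Y (pl j)) (mixT pl s i Z Y X j))
    (dTgt (s j) (updF Z i Y (pl j)) (mixT pl s i Z Y X j)) := fun j => by
  unfold mixT updF
  by_cases h : pl j = i
  · simp only [if_pos h]
    cases hs : s j
    · exact t
    · exact .id Y
  · simp only [if_neg h]
    exact dId (Z (pl j)) (s j)

/-- the argument vector `g'` of the equation (α) (right-hand side, source functor) -/
def vecC : ∀ j, DTerm Φ Ψ (dSrc (s j) (mixT pl s i Z X Y j) (updF Z i X (pl j)))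
    (dTgt (s j) (mixT pl s i Z X Y j) (updF Z i X (pl j))) := fun j => by
  unfold mixT updF
  by_cases h : pl j = i
  · simp only [if_pos h]
    cases hs : s j
    · exact t
    · exact .id X
  · simp only [if_neg h]
    exact dId (Z (pl j)) (s j)

/-- the argument vector `h'` of the equation (α) (right-hand side, target functor) -/
def vecD : ∀ j, DTerm Φ Ψ (dSrc (s j) (updF Z i X (pl j)) (mixT pl s i Z Y X j))
    (dTgt (s j) (updF Z i X (pl j)) (mixT pl s i Z Y X j)) := fun j => by
  unfold mixT updF
  by_cases h : pl j = i
  · simp only [if_pos h]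
    cases hs : s j
    · exact .id X
    · exact t
  · simp only [if_neg h]
    exact dId (Z (pl j)) (s j)

end vecs

/-- Equality of morphism terms of `𝒟`: the congruence generated by the
`𝒦_{Φ,Ψ}`-equations (categorial, functorial and g-dinatural equations). -/
inductive DEq : ∀ {X Y : DObj m n p}, DTerm Φ Ψ X Y → DTerm Φ Ψ X Y → Prop
  | refl {X Y} (g : DTerm Φ Ψ X Y) : DEq g g
  | symm {X Y} {g h : DTerm Φ Ψ X Y} : DEq g h → DEq h g
  | trans {X Y} {g h t : DTerm Φ Ψ X Y} : DEq g h → DEq h t → DEq g t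
  | comp_congr {X Y Z} {g g' : DTerm Φ Ψ X Y} {h h' : DTerm Φ Ψ Y Z} :
      DEq g g' → DEq h h' → DEq (.comp g h) (.comp g' h')
  | mapT_congr {X Y : Fin m → DObj m n p} {a b : ∀ i, DTerm Φ Ψ (dSrc (sx i) (X i) (Y i)) (dTgt (sx i) (X i) (Y i))} :
      (∀ i, DEq (a i) (b i)) → DEq (.mapT a) (.mapT b)
  | mapS_congr {X Y : Fin n → DObj m n p} {a b : ∀ j, DTerm Φ Ψ (dSrc (sy j) (X j) (Y j)) (dTgt (sy j) (X j) (Y j))} :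
      (∀ j, DEq (a j) (b j)) → DEq (.mapS a) (.mapS b)
  | mapR_congr {X Y : Fin p → DObj m n p} {a b : ∀ l, DTerm Φ Ψ (dSrc (sz l) (X l) (Y l)) (dTgt (sz l) (X l) (Y l))} :
      (∀ l, DEq (a l) (b l)) → DEq (.mapR a) (.mapR b)
  -- categorial equations
  | id_left {X Y} (g : DTerm Φ Ψ X Y) : DEq (.comp (.id X) g) g
  | id_right {X Y} (g : DTerm Φ Ψ X Y) : DEq (.comp g (.id Y)) g
  | assoc {X Y Z W} (g : DTerm Φ Ψ X Y) (h : DTerm Φ Ψ Y Z) (t : DTerm Φ Ψ Z W) :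
      DEq (.comp (.comp g h) t) (.comp g (.comp h t))
  -- functorial equations
  | functT {X Y Z : Fin m → DObj m n p}
      (a : ∀ i, DTerm Φ Ψ (dSrc (sx i) (X i) (Y i)) (dTgt (sx i) (X i) (Y i)))
      (b : ∀ i, DTerm Φ Ψ (dSrc (sx i) (Y i) (Z i)) (dTgt (sx i) (Y i) (Z i))) :
      DEq (.comp (.mapT a) (.mapT b)) (.mapT (fun i => dComp (sx i) (a i) (b i)))
  | functS {X Y Z : Fin n → DObj m n p}
      (a : ∀ j, DTerm Φ Ψ (dSrc (sy j) (X j) (Y j)) (dTgt (sy j) (X j) (Y j)))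
      (b : ∀ j, DTerm Φ Ψ (dSrc (sy j) (Y j) (Z j)) (dTgt (sy j) (Y j) (Z j))) :
      DEq (.comp (.mapS a) (.mapS b)) (.mapS (fun j => dComp (sy j) (a j) (b j)))
  | functR {X Y Z : Fin p → DObj m n p}
      (a : ∀ l, DTerm Φ Ψ (dSrc (sz l) (X l) (Y l)) (dTgt (sz l) (X l) (Y l)))
      (b : ∀ l, DTerm Φ Ψ (dSrc (sz l) (Y l) (Z l)) (dTgt (sz l) (Y l) (Z l))) :
      DEq (.comp (.mapR a) (.mapR b)) (.mapR (fun l => dComp (sz l) (a l) (b l)))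
  | functT_id (X : Fin m → DObj m n p) :
      DEq (.mapT (fun i => dId (X i) (sx i))) (.id (.T X))
  | functS_id (X : Fin n → DObj m n p) :
      DEq (.mapS (fun j => dId (X j) (sy j))) (.id (.S X))
  | functR_id (X : Fin p → DObj m n p) :
      DEq (.mapR (fun l => dId (X l) (sz l))) (.id (.R X))
  -- g-dinatural equations
  | alphaEq (i : Fin Φ.k) (Z : Fin Φ.k → DObj m n p) {X Y : DObj m n p}
      (t : DTerm Φ Ψ X Y) :
      DEq (.comp (.mapT (vecA Φ.πL sx i Z t))
            (.comp (.alpha (updF Z i Y)) (.mapS (vecB Φ.πR sy i Z t))))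
          (.comp (.mapT (vecC Φ.πL sx i Z t))
            (.comp (.alpha (updF Z i X)) (.mapS (vecD Φ.πR sy i Z t))))
  | betaEq (i : Fin Ψ.k) (Z : Fin Ψ.k → DObj m n p) {X Y : DObj m n p}
      (t : DTerm Φ Ψ X Y) :
      DEq (.comp (.mapS (vecA Ψ.πL sy i Z t))
            (.comp (.beta (updF Z i Y)) (.mapR (vecB Ψ.πR sz i Z t))))
          (.comp (.mapS (vecC Ψ.πL sy i Z t))
            (.comp (.beta (updF Z i X)) (.mapR (vecD Ψ.πR sz i Z t))))

end DD

section Nat0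
variable {m n p gΦ gΨ : ℕ} {sx : Fin m → Bool} {sy : Fin n → Bool} {sz : Fin p → Bool}
variable {Φ : GGraph m n gΦ sx sy} {Ψ : GGraph n p gΨ sy sz}

/-- the object `T⟨A,C⟩` -/
def TAC (sx : Fin m → Bool) : DObj m n p := .T fun i => cond (sx i) .A .C
/-- the object `R⟨C,A⟩` -/
def RCA (sz : Fin p → Bool) : DObj m n p := .R fun l => cond (sz l) .C .A

/-- the argument vector of `T⟨f,1_C⟩ : T⟨A,C⟩ → T(C,…,C)` -/
def gvecC : ∀ i, DTerm Φ Ψ (dSrc (sx i) (cond (sx i) DObj.A DObj.C) DObj.C)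
    (dTgt (sx i) (cond (sx i) DObj.A DObj.C) DObj.C) := fun i => by
  cases hs : sx i
  · exact .id .C
  · exact .f

/-- the argument vector of `T⟨1_A,f⟩ : T⟨A,C⟩ → T(A,…,A)` -/
def gvecA : ∀ i, DTerm Φ Ψ (dSrc (sx i) (cond (sx i) DObj.A DObj.C) DObj.A)
    (dTgt (sx i) (cond (sx i) DObj.A DObj.C) DObj.A) := fun i => by
  cases hs : sx i
  · exact .f
  · exact .id .A

/-- the argument vector of `R⟨1_C,f⟩ : R(C,…,C) → R⟨C,A⟩` -/
def rvecC : ∀ l, DTerm Φ Ψ (dSrc (sz l) DObj.C (cond (sz l) DObj.C DObj.A))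
    (dTgt (sz l) DObj.C (cond (sz l) DObj.C DObj.A)) := fun l => by
  cases hs : sz l
  · exact .f
  · exact .id .C

/-- the argument vector of `R⟨f,1_A⟩ : R(A,…,A) → R⟨C,A⟩` -/
def rvecA : ∀ l, DTerm Φ Ψ (dSrc (sz l) DObj.A (cond (sz l) DObj.C DObj.A))
    (dTgt (sz l) DObj.A (cond (sz l) DObj.C DObj.A)) := fun l => by
  cases hs : sz l
  · exact .id .A
  · exact .f

/-- the left-hand side of the equation `(nat)`:
`R⟨1_C,f⟩ ∘ β(C,…,C) ∘ α(C,…,C) ∘ T⟨f,1_C⟩` (written diagrammatically) -/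
def natLHS (Φ : GGraph m n gΦ sx sy) (Ψ : GGraph n p gΨ sy sz) :
    DTerm Φ Ψ (TAC sx) (RCA sz) :=
  .comp (.mapT gvecC)
    (.comp (.alpha fun _ => .C) (.comp (.beta fun _ => .C) (.mapR rvecC)))

/-- the right-hand side of the equation `(nat)`:
`R⟨f,1_A⟩ ∘ β(A,…,A) ∘ α(A,…,A) ∘ T⟨1_A,f⟩` -/
def natRHS (Φ : GGraph m n gΦ sx sy) (Ψ : GGraph n p gΨ sy sz) :
    DTerm Φ Ψ (TAC sx) (RCA sz) :=
  .comp (.mapT gvecA)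
    (.comp (.alpha fun _ => .A) (.comp (.beta fun _ => .A) (.mapR rvecA)))

end Nat0

section Chains
variable {m n p gΦ gΨ : ℕ} {sx : Fin m → Bool} {sy : Fin n → Bool} {sz : Fin p → Bool}
variable {Φ : GGraph m n gΦ sx sy} {Ψ : GGraph n p gΨ sy sz}

/-- the number of occurrences of the generator `f` in a composite of primitive
morphism terms -/
def fCount : ∀ {X Y : DObj m n p}, DTerm Φ Ψ X Y → ℕ
  | _, _, .f => 1
  | _, _, .comp g h => fCount g + fCount h
  | _, _, _ => 0

/-- `Chain g` says that `g` is a composite (in any order of association) of the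
identities `1_A`, `1_C` and the generator `f`; together with `fCount g ≤ 1` this
expresses that `g` is identical, up to associativity of composition, to a term of
the form `1_C ∘ ⋯ ∘ 1_C ∘ [f] ∘ 1_A ∘ ⋯ ∘ 1_A`. -/
inductive Chain : ∀ {X Y : DObj m n p}, DTerm Φ Ψ X Y → Prop
  | f : Chain .f
  | idA : Chain (.id .A)
  | idC : Chain (.id .C)
  | comp {X Y Z} {g : DTerm Φ Ψ X Y} {h : DTerm Φ Ψ Y Z} :
      Chain g → Chain h → Chain (.comp g h)

end Chains

section CFsec
variable {m n p gΦ gΨ : ℕ} {sx : Fin m → Bool} {sy : Fin n → Bool} {sz : Fin p → Bool}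
variable {Φ : GGraph m n gΦ sx sy} {Ψ : GGraph n p gΨ sy sz}

/-- identity of morphism terms up to associativity of composition -/
inductive AEq : ∀ {X Y : DObj m n p}, DTerm Φ Ψ X Y → DTerm Φ Ψ X Y → Prop
  | refl {X Y} (g : DTerm Φ Ψ X Y) : AEq g g
  | symm {X Y} {g h : DTerm Φ Ψ X Y} : AEq g h → AEq h g
  | trans {X Y} {g h t : DTerm Φ Ψ X Y} : AEq g h → AEq h t → AEq g t
  | comp_congr {X Y Z} {g g' : DTerm Φ Ψ X Y} {h h' : DTerm Φ Ψ Y Z} :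
      AEq g g' → AEq h h' → AEq (.comp g h) (.comp g' h')
  | mapT_congr {X Y : Fin m → DObj m n p}
      {a b : ∀ i, DTerm Φ Ψ (dSrc (sx i) (X i) (Y i)) (dTgt (sx i) (X i) (Y i))} :
      (∀ i, AEq (a i) (b i)) → AEq (.mapT a) (.mapT b)
  | mapS_congr {X Y : Fin n → DObj m n p}
      {a b : ∀ j, DTerm Φ Ψ (dSrc (sy j) (X j) (Y j)) (dTgt (sy j) (X j) (Y j))} :
      (∀ j, AEq (a j) (b j)) → AEq (.mapS a) (.mapS b)
  | mapR_congr {X Y : Fin p → DObj m n p}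
      {a b : ∀ l, DTerm Φ Ψ (dSrc (sz l) (X l) (Y l)) (dTgt (sz l) (X l) (Y l))} :
      (∀ l, AEq (a l) (b l)) → AEq (.mapR a) (.mapR b)
  | assoc {X Y Z W} (g : DTerm Φ Ψ X Y) (h : DTerm Φ Ψ Y Z) (t : DTerm Φ Ψ Z W) :
      AEq (.comp (.comp g h) t) (.comp g (.comp h t))

/-- a single categorial-functorial (`CF`) contraction, applied in an arbitrary
subterm position -/
inductive CFRaw : ∀ {X Y : DObj m n p}, DTerm Φ Ψ X Y → DTerm Φ Ψ X Y → Prop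
  | id_left {X Y} (g : DTerm Φ Ψ X Y) : CFRaw (.comp (.id X) g) g
  | id_right {X Y} (g : DTerm Φ Ψ X Y) : CFRaw (.comp g (.id Y)) g
  | functT {X Y Z : Fin m → DObj m n p}
      (a : ∀ i, DTerm Φ Ψ (dSrc (sx i) (X i) (Y i)) (dTgt (sx i) (X i) (Y i)))
      (b : ∀ i, DTerm Φ Ψ (dSrc (sx i) (Y i) (Z i)) (dTgt (sx i) (Y i) (Z i))) :
      CFRaw (.comp (.mapT a) (.mapT b)) (.mapT (fun i => dComp (sx i) (a i) (b i)))
  | functS {X Y Z : Fin n → DObj m n p}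
      (a : ∀ j, DTerm Φ Ψ (dSrc (sy j) (X j) (Y j)) (dTgt (sy j) (X j) (Y j)))
      (b : ∀ j, DTerm Φ Ψ (dSrc (sy j) (Y j) (Z j)) (dTgt (sy j) (Y j) (Z j))) :
      CFRaw (.comp (.mapS a) (.mapS b)) (.mapS (fun j => dComp (sy j) (a j) (b j)))
  | functR {X Y Z : Fin p → DObj m n p}
      (a : ∀ l, DTerm Φ Ψ (dSrc (sz l) (X l) (Y l)) (dTgt (sz l) (X l) (Y l)))
      (b : ∀ l, DTerm Φ Ψ (dSrc (sz l) (Y l) (Z l)) (dTgt (sz l) (Y l) (Z l))) :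
      CFRaw (.comp (.mapR a) (.mapR b)) (.mapR (fun l => dComp (sz l) (a l) (b l)))
  | functT_id (X : Fin m → DObj m n p) :
      CFRaw (.mapT (fun i => dId (X i) (sx i))) (.id (.T X))
  | functS_id (X : Fin n → DObj m n p) :
      CFRaw (.mapS (fun j => dId (X j) (sy j))) (.id (.S X))
  | functR_id (X : Fin p → DObj m n p) :
      CFRaw (.mapR (fun l => dId (X l) (sz l))) (.id (.R X))
  | comp_left {X Y Z} {g g' : DTerm Φ Ψ X Y} (h : DTerm Φ Ψ Y Z) :
      CFRaw g g' → CFRaw (.comp g h) (.comp g' h)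
  | comp_right {X Y Z} (g : DTerm Φ Ψ X Y) {h h' : DTerm Φ Ψ Y Z} :
      CFRaw h h' → CFRaw (.comp g h) (.comp g h')
  | mapT_arg {X Y : Fin m → DObj m n p}
      (a : ∀ i, DTerm Φ Ψ (dSrc (sx i) (X i) (Y i)) (dTgt (sx i) (X i) (Y i)))
      (i₀ : Fin m) (t' : DTerm Φ Ψ (dSrc (sx i₀) (X i₀) (Y i₀)) (dTgt (sx i₀) (X i₀) (Y i₀))) :
      CFRaw (a i₀) t' → CFRaw (.mapT a) (.mapT (Function.update a i₀ t'))
  | mapS_arg {X Y : Fin n → DObj m n p}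
      (a : ∀ j, DTerm Φ Ψ (dSrc (sy j) (X j) (Y j)) (dTgt (sy j) (X j) (Y j)))
      (j₀ : Fin n) (t' : DTerm Φ Ψ (dSrc (sy j₀) (X j₀) (Y j₀)) (dTgt (sy j₀) (X j₀) (Y j₀))) :
      CFRaw (a j₀) t' → CFRaw (.mapS a) (.mapS (Function.update a j₀ t'))
  | mapR_arg {X Y : Fin p → DObj m n p}
      (a : ∀ l, DTerm Φ Ψ (dSrc (sz l) (X l) (Y l)) (dTgt (sz l) (X l) (Y l)))
      (l₀ : Fin p) (t' : DTerm Φ Ψ (dSrc (sz l₀) (X l₀) (Y l₀)) (dTgt (sz l₀) (X l₀) (Y l₀))) :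
      CFRaw (a l₀) t' → CFRaw (.mapR a) (.mapR (Function.update a l₀ t'))

/-- a `CF` reduction step on morphism terms identified up to associativity of
composition -/
def CFStep {X Y : DObj m n p} (g h : DTerm Φ Ψ X Y) : Prop :=
  ∃ g' h', AEq g g' ∧ CFRaw g' h' ∧ AEq h' h

/-- `g` is in `CF` normal form -/
def CFNormal {X Y : DObj m n p} (g : DTerm Φ Ψ X Y) : Prop := ¬ ∃ h, CFStep g h

end CFsec

section Msec
variable {m n p gΦ gΨ : ℕ} {sx : Fin m → Bool} {sy : Fin n → Bool} {sz : Fin p → Bool}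
variable {Φ : GGraph m n gΦ sx sy} {Ψ : GGraph n p gΨ sy sz}

/-- an argument of one of the operations `T`, `S`, `R` inside a bar term:
a composite of identities and at most one occurrence of `f` -/
def ArgOK {X Y : DObj m n p} (t : DTerm Φ Ψ X Y) : Prop := Chain t ∧ fCount t ≤ 1

/-- a term `T̄`: a (possibly empty) composite of terms of the form
`1 ∘ ⋯ ∘ T(t₁,…,t_m) ∘ ⋯ ∘ 1` with each `tᵢ` a composite of identities and at most
one occurrence of `f` -/
inductive TBar : ∀ {X Y : DObj m n p}, DTerm Φ Ψ X Y → Prop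
  | id (X : DObj m n p) : TBar (.id X)
  | map {X Y : Fin m → DObj m n p}
      (a : ∀ i, DTerm Φ Ψ (dSrc (sx i) (X i) (Y i)) (dTgt (sx i) (X i) (Y i))) :
      (∀ i, ArgOK (a i)) → TBar (.mapT a)
  | comp {X Y Z} {g : DTerm Φ Ψ X Y} {h : DTerm Φ Ψ Y Z} :
      TBar g → TBar h → TBar (.comp g h)

/-- a term `S̄` -/
inductive SBar : ∀ {X Y : DObj m n p}, DTerm Φ Ψ X Y → Prop
  | id (X : DObj m n p) : SBar (.id X)
  | map {X Y : Fin n → DObj m n p}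
      (a : ∀ j, DTerm Φ Ψ (dSrc (sy j) (X j) (Y j)) (dTgt (sy j) (X j) (Y j))) :
      (∀ j, ArgOK (a j)) → SBar (.mapS a)
  | comp {X Y Z} {g : DTerm Φ Ψ X Y} {h : DTerm Φ Ψ Y Z} :
      SBar g → SBar h → SBar (.comp g h)

/-- a term `R̄` -/
inductive RBar : ∀ {X Y : DObj m n p}, DTerm Φ Ψ X Y → Prop
  | id (X : DObj m n p) : RBar (.id X)
  | map {X Y : Fin p → DObj m n p}
      (a : ∀ l, DTerm Φ Ψ (dSrc (sz l) (X l) (Y l)) (dTgt (sz l) (X l) (Y l))) :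
      (∀ l, ArgOK (a l)) → RBar (.mapR a)
  | comp {X Y Z} {g : DTerm Φ Ψ X Y} {h : DTerm Φ Ψ Y Z} :
      RBar g → RBar h → RBar (.comp g h)

/-- the set `ℳ`: morphism terms of type `T⟨A,C⟩ → R⟨C,A⟩` of the form
`R̄ β(Y₁,…,Y_{k_Ψ}) S̄ α(X₁,…,X_{k_Φ}) T̄` (up to associativity of composition) with
all the `X`'s and `Y`'s in `{A, C}` -/
def InM (g : DTerm Φ Ψ (TAC sx) (RCA sz)) : Prop :=
  ∃ (Xv : Fin Φ.k → DObj m n p) (Yv : Fin Ψ.k → DObj m n p)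
    (tb : DTerm Φ Ψ (TAC sx) (.T fun i => Xv (Φ.πL i)))
    (sb : DTerm Φ Ψ (.S fun j => Xv (Φ.πR j)) (.S fun j => Yv (Ψ.πL j)))
    (rb : DTerm Φ Ψ (.R fun l => Yv (Ψ.πR l)) (RCA sz)),
    (∀ c, Xv c = DObj.A ∨ Xv c = DObj.C) ∧ (∀ c, Yv c = DObj.A ∨ Yv c = DObj.C) ∧
    TBar tb ∧ SBar sb ∧ RBar rb ∧
    AEq g (.comp tb (.comp (.alpha Xv) (.comp sb (.comp (.beta Yv) rb))))

end Msec

/-! ### The set `ℳ₀` of `CF`-normal terms of `ℳ`, and `D` reduction -/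

/-- the possible arguments `1_A`, `1_C`, `f` of `T`, `S`, `R` in a term of `ℳ₀` -/
inductive MArg : Type
  | idA : MArg
  | idC : MArg
  | ff : MArg
deriving DecidableEq

section MZsec
variable {m n p gΦ gΨ : ℕ} {sx : Fin m → Bool} {sy : Fin n → Bool} {sz : Fin p → Bool}

/-- A term of `ℳ₀`, i.e. a `CF`-normal form `[R(t⃗)] β(Y⃗) [S(h⃗)] α(X⃗) [T(g⃗)]` of a
term of `ℳ`, of type `T⟨A,C⟩ → R⟨C,A⟩`.  Such a term is completely determined by the
tuples `X⃗` and `Y⃗` of objects from `{A, C}` (here `true` codes `C` and `false`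
codes `A`), subject to the typing (compatibility) condition below; the argument
vectors `g⃗`, `h⃗`, `t⃗` are then recovered by `MZ.g`, `MZ.h`, `MZ.t`. -/
structure MZ (Φ : GGraph m n gΦ sx sy) (Ψ : GGraph n p gΨ sy sz) : Type where
  Xv : Fin Φ.k → Bool
  Yv : Fin Ψ.k → Bool
  compat : ∀ j : Fin n,
    (sy j = true → ¬(Xv (Φ.πR j) = true ∧ Yv (Ψ.πL j) = false)) ∧
    (sy j = false → ¬(Yv (Ψ.πL j) = true ∧ Xv (Φ.πR j) = false))

variable {Φ : GGraph m n gΦ sx sy} {Ψ : GGraph n p gΨ sy sz}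

/-- the argument of `T` at the place `x_i` -/
def MZ.g (z : MZ Φ Ψ) (i : Fin m) : MArg :=
  if sx i then (if z.Xv (Φ.πL i) then .ff else .idA)
  else (if z.Xv (Φ.πL i) then .idC else .ff)

/-- the argument of `S` at the place `y_j` -/
def MZ.h (z : MZ Φ Ψ) (j : Fin n) : MArg :=
  if sy j then
    (if z.Xv (Φ.πR j) then .idC else if z.Yv (Ψ.πL j) then .ff else .idA)
  else
    (if z.Yv (Ψ.πL j) then .idC else if z.Xv (Φ.πR j) then .ff else .idA)

/-- the argument of `R` at the place `z_l` -/
def MZ.t (z : MZ Φ Ψ) (l : Fin p) : MArg :=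
  if sz l then (if z.Yv (Ψ.πR l) then .idC else .ff)
  else (if z.Yv (Ψ.πR l) then .ff else .idA)

/-- the argument occupying a (left- or right-hand) argument place of `Φ` -/
def MZ.occPhi (z : MZ Φ Ψ) : Fin m ⊕ Fin n → MArg := Sum.elim z.g z.h

/-- the argument occupying a (left- or right-hand) argument place of `Ψ` -/
def MZ.occPsi (z : MZ Φ Ψ) : Fin n ⊕ Fin p → MArg := Sum.elim z.h z.t

/-- One step of `D` reduction on the set `ℳ₀`, applied to the entire term: an
`(α_i)`-step replaces the `i`-th argument `C` of `α` by `A`, provided all the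
arguments `g_j` with `x_j ∈ Φ_i⁺` and all the arguments `h_j` with `y_j ∈ Φ_i⁻`
are `f`; the affected arguments are updated accordingly (which, the terms of `ℳ₀`
being determined by `X⃗` and `Y⃗`, is captured by updating `X⃗`).  `(β_i)`-steps are
analogous. -/
inductive DStep : MZ Φ Ψ → MZ Φ Ψ → Prop
  | alphaStep (z z' : MZ Φ Ψ) (i : Fin Φ.k) :
      z.Xv i = true →
      (∀ j : Fin m, sx j = true → Φ.πL j = i → z.g j = .ff) →
      (∀ j : Fin n, sy j = false → Φ.πR j = i → z.h j = .ff) →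
      z'.Xv = Function.update z.Xv i false →
      z'.Yv = z.Yv →
      DStep z z'
  | betaStep (z z' : MZ Φ Ψ) (i : Fin Ψ.k) :
      z.Yv i = true →
      (∀ j : Fin n, sy j = true → Ψ.πL j = i → z.h j = .ff) →
      (∀ l : Fin p, sz l = false → Ψ.πR l = i → z.t l = .ff) →
      z'.Yv = Function.update z.Yv i false →
      z'.Xv = z.Xv →
      DStep z z'

/-- a term of `ℳ₀` is in `D` normal form -/
def DNormal (z : MZ Φ Ψ) : Prop := ¬ ∃ z', DStep z z'

end MZsec

section ToTerm
variable {m n p gΦ gΨ : ℕ} {sx : Fin m → Bool} {sy : Fin n → Bool} {sz : Fin p → Bool}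
variable {Φ : GGraph m n gΦ sx sy} {Ψ : GGraph n p gΨ sy sz}

/-- the object (`A` or `C`) coded by a Boolean (`true` codes `C`) -/
def boolObj (b : Bool) : DObj m n p := cond b .C .A

/-- the argument vector `g⃗` of a term of `ℳ₀`, as morphism terms -/
def gTm (z : MZ Φ Ψ) :
    ∀ i, DTerm Φ Ψ (dSrc (sx i) (cond (sx i) DObj.A DObj.C) (boolObj (z.Xv (Φ.πL i))))
      (dTgt (sx i) (cond (sx i) DObj.A DObj.C) (boolObj (z.Xv (Φ.πL i)))) := fun i => by
  unfold boolObj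
  cases hs : sx i <;> cases hx : z.Xv (Φ.πL i)
  · exact .f
  · exact .id .C
  · exact .id .A
  · exact .f

/-- the argument vector `h⃗` of a term of `ℳ₀`, as morphism terms -/
def hTm (z : MZ Φ Ψ) :
    ∀ j, DTerm Φ Ψ (dSrc (sy j) (boolObj (z.Xv (Φ.πR j))) (boolObj (z.Yv (Ψ.πL j))))
      (dTgt (sy j) (boolObj (z.Xv (Φ.πR j))) (boolObj (z.Yv (Ψ.πL j)))) := fun j => by
  unfold boolObj
  cases hs : sy j <;> cases hx : z.Xv (Φ.πR j) <;> cases hy : z.Yv (Ψ.πL j)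
  · exact .id .A
  · exact absurd (And.intro hy hx) ((z.compat j).2 hs)
  · exact .f
  · exact .id .C
  · exact .id .A
  · exact .f
  · exact absurd (And.intro hx hy) ((z.compat j).1 hs)
  · exact .id .C

/-- the argument vector `t⃗` of a term of `ℳ₀`, as morphism terms -/
def tTm (z : MZ Φ Ψ) :
    ∀ l, DTerm Φ Ψ (dSrc (sz l) (boolObj (z.Yv (Ψ.πR l))) (cond (sz l) DObj.C DObj.A))
      (dTgt (sz l) (boolObj (z.Yv (Ψ.πR l))) (cond (sz l) DObj.C DObj.A)) := fun l => by
  unfold boolObj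
  cases hs : sz l <;> cases hy : z.Yv (Ψ.πR l)
  · exact .id .A
  · exact .f
  · exact .f
  · exact .id .C

/-- the morphism term `R(t⃗) β(Y⃗) S(h⃗) α(X⃗) T(g⃗)` determined by a term of `ℳ₀`
(with all three functor applications present; dropping those whose arguments are all
identities yields the corresponding `CF` normal form) -/
def MZ.toTerm (z : MZ Φ Ψ) : DTerm Φ Ψ (TAC sx) (RCA sz) :=
  .comp (.mapT (gTm z))
    (.comp (.alpha fun c => boolObj (z.Xv c))
      (.comp (.mapS (hTm z))
        (.comp (.beta fun c => boolObj (z.Yv c)) (.mapR (tTm z)))))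

/-- `z` represents the `CF` normal form `CF(g)` of `g`: the term of `ℳ₀` coded by
`z` and the term `g` have a common `CF` reduct which is in `CF` normal form -/
def ReprCF (g : DTerm Φ Ψ (TAC sx) (RCA sz)) (z : MZ Φ Ψ) : Prop :=
  ∃ nf, Relation.ReflTransGen CFStep g nf ∧
    Relation.ReflTransGen CFStep z.toTerm nf ∧ CFNormal nf

end ToTerm

section Helpers
variable {m n p gΦ gΨ : ℕ} {sx : Fin m → Bool} {sy : Fin n → Bool} {sz : Fin p → Bool}
variable {Φ : GGraph m n gΦ sx sy} {Ψ : GGraph n p gΨ sy sz}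

/-! #### CF reduction is sound -/

theorem AEq.toDEq {X Y : DObj m n p} {g h : DTerm Φ Ψ X Y} (H : AEq g h) : DEq g h := by
  induction H with
  | refl g => exact .refl g
  | symm _ ih => exact .symm ih
  | trans _ _ ih1 ih2 => exact .trans ih1 ih2
  | comp_congr _ _ ih1 ih2 => exact .comp_congr ih1 ih2
  | mapT_congr _ ih => exact .mapT_congr ih
  | mapS_congr _ ih => exact .mapS_congr ih
  | mapR_congr _ ih => exact .mapR_congr ih
  | assoc g h t => exact .assoc g h t

theorem CFRaw.toDEq {X Y : DObj m n p} {g h : DTerm Φ Ψ X Y} (H : CFRaw g h) : DEq g h := by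
  induction H with
  | id_left g => exact .id_left g
  | id_right g => exact .id_right g
  | functT a b => exact .functT a b
  | functS a b => exact .functS a b
  | functR a b => exact .functR a b
  | functT_id X => exact .functT_id X
  | functS_id X => exact .functS_id X
  | functR_id X => exact .functR_id X
  | comp_left h _ ih => exact .comp_congr ih (.refl _)
  | comp_right g _ ih => exact .comp_congr (.refl _) ih
  | mapT_arg a i₀ t' _ ih =>
    refine .mapT_congr fun i => ?_
    by_cases hi : i = i₀
    · subst hi; simpa using ih
    · rw [Function.update_of_ne hi]; exact .refl _
  | mapS_arg a i₀ t' _ ih =>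
    refine .mapS_congr fun i => ?_
    by_cases hi : i = i₀
    · subst hi; simpa using ih
    · rw [Function.update_of_ne hi]; exact .refl _
  | mapR_arg a i₀ t' _ ih =>
    refine .mapR_congr fun i => ?_
    by_cases hi : i = i₀
    · subst hi; simpa using ih
    · rw [Function.update_of_ne hi]; exact .refl _

theorem cfSteps_toDEq {X Y : DObj m n p} {g h : DTerm Φ Ψ X Y}
    (H : Relation.ReflTransGen CFStep g h) : DEq g h := by
  induction H with
  | refl => exact .refl _
  | tail _ hs ih =>
    obtain ⟨a, b, h1, h2, h3⟩ := hs
    exact ih.trans (h1.toDEq.trans (h2.toDEq.trans h3.toDEq))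

theorem ReprCF.toDEq {g : DTerm Φ Ψ (TAC sx) (RCA sz)} {z : MZ Φ Ψ} (H : ReprCF g z) :
    DEq g z.toTerm := by
  obtain ⟨nf, h1, h2, _⟩ := H
  exact (cfSteps_toDEq h1).trans (cfSteps_toDEq h2).symm

/-! #### Terms between `A` and `C` are unique -/

def AC (X : DObj m n p) : Prop := X = .A ∨ X = .C

inductive Can : ∀ {X Y : DObj m n p}, DTerm Φ Ψ X Y → Prop
  | idA : Can (.id .A)
  | idC : Can (.id .C)
  | f : Can .f

theorem can_unique {X Y : DObj m n p} {g h : DTerm Φ Ψ X Y} (hg : Can g) (hh : Can h) :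
    g = h := by
  cases hg <;> cases hh <;> rfl

theorem exists_can {X Y : DObj m n p} (g : DTerm Φ Ψ X Y) (hX : AC X) :
    AC Y ∧ ∃ g' : DTerm Φ Ψ X Y, Can g' ∧ DEq g g' := by
  induction g with
  | f => exact ⟨.inr rfl, _, .f, .refl _⟩
  | id X =>
    refine ⟨hX, ?_⟩
    rcases hX with rfl | rfl
    · exact ⟨_, .idA, .refl _⟩
    · exact ⟨_, .idC, .refl _⟩
  | comp g h ih1 ih2 =>
    obtain ⟨hY, g', cg, eg⟩ := ih1 hX
    obtain ⟨hZ, h', ch, eh⟩ := ih2 hY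
    refine ⟨hZ, ?_⟩
    have e := DEq.comp_congr eg eh
    cases cg with
    | idA => exact ⟨_, ch, e.trans (.id_left _)⟩
    | idC => exact ⟨_, ch, e.trans (.id_left _)⟩
    | f =>
      cases ch with
      | idC => exact ⟨_, .f, e.trans (.id_right _)⟩
  | alpha W => rcases hX with h | h <;> cases h
  | beta W => rcases hX with h | h <;> cases h
  | mapT a => rcases hX with h | h <;> cases h
  | mapS a => rcases hX with h | h <;> cases h
  | mapR a => rcases hX with h | h <;> cases h

theorem thin {X Y : DObj m n p} (g h : DTerm Φ Ψ X Y) (hX : AC X) : DEq g h := by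
  obtain ⟨_, g', cg, eg⟩ := exists_can g hX
  obtain ⟨_, h', ch, eh⟩ := exists_can h hX
  rw [can_unique cg ch] at eg
  exact eg.trans eh.symm

theorem thinD {b : Bool} {X Y : DObj m n p} (g h : DTerm Φ Ψ (dSrc b X Y) (dTgt b X Y))
    (hX : AC X) (hY : AC Y) : DEq g h := by
  apply thin
  cases b
  · exact hY
  · exact hX

theorem AC_boolObj (b : Bool) : AC (boolObj b : DObj m n p) := by
  cases b
  · exact .inl rfl
  · exact .inr rfl

theorem AC_cond (b : Bool) {X Y : DObj m n p} (hX : AC X) (hY : AC Y) : AC (cond b X Y) := by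
  cases b
  · exact hY
  · exact hX

theorem AC_A : AC (.A : DObj m n p) := .inl rfl
theorem AC_C : AC (.C : DObj m n p) := .inr rfl

/-! #### D steps are sound -/

theorem alpha_move {x : Fin m → DObj m n p} {y : Fin n → DObj m n p}
    {Z : Fin Φ.k → DObj m n p} (i : Fin Φ.k) {W W' : Fin Φ.k → DObj m n p}
    (hW : W = updF Z i .C) (hW' : W' = updF Z i .A)
    (hx : ∀ i, AC (x i)) (hy : ∀ j, AC (y j)) (hWA : ∀ c, AC (W c)) (hWA' : ∀ c, AC (W' c))
    (a : ∀ i, DTerm Φ Ψ (dSrc (sx i) (x i) (W (Φ.πL i))) (dTgt (sx i) (x i) (W (Φ.πL i))))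
    (b : ∀ j, DTerm Φ Ψ (dSrc (sy j) (W (Φ.πR j)) (y j)) (dTgt (sy j) (W (Φ.πR j)) (y j)))
    (a' : ∀ i, DTerm Φ Ψ (dSrc (sx i) (x i) (W' (Φ.πL i))) (dTgt (sx i) (x i) (W' (Φ.πL i))))
    (b' : ∀ j, DTerm Φ Ψ (dSrc (sy j) (W' (Φ.πR j)) (y j)) (dTgt (sy j) (W' (Φ.πR j)) (y j)))
    (a0 : ∀ j, Nonempty (DTerm Φ Ψ (dSrc (sx j) (x j) (mixT Φ.πL sx i Z .A .C j))
      (dTgt (sx j) (x j) (mixT Φ.πL sx i Z .A .C j))))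
    (b0 : ∀ j, Nonempty (DTerm Φ Ψ (dSrc (sy j) (mixT Φ.πR sy i Z .C .A j) (y j))
      (dTgt (sy j) (mixT Φ.πR sy i Z .C .A j) (y j)))) :
    DEq (.comp (.mapT a) (.comp (.alpha W) (.mapS b)))
      (.comp (.mapT a') (.comp (.alpha W') (.mapS b'))) := by
  subst hW hW'
  replace a0 := fun j => Classical.choice (a0 j)
  replace b0 := fun j => Classical.choice (b0 j)
  have e := DEq.alphaEq (Ψ := Ψ) i Z (DTerm.f)
  have e2 := DEq.comp_congr (.refl (.mapT a0)) (DEq.comp_congr e (.refl (.mapS b0)))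
  have l1 : DEq (.mapT a) (.comp (.mapT a0) (.mapT (vecA Φ.πL sx i Z DTerm.f))) :=
    .trans (.mapT_congr fun j => thinD _ _ (hx j) (hWA _)) (.symm (.functT _ _))
  have l2 : DEq (.mapT a') (.comp (.mapT a0) (.mapT (vecC Φ.πL sx i Z DTerm.f))) :=
    .trans (.mapT_congr fun j => thinD _ _ (hx j) (hWA' _)) (.symm (.functT _ _))
  have l3 : DEq (.mapS b) (.comp (.mapS (vecB Φ.πR sy i Z DTerm.f)) (.mapS b0)) :=
    .trans (.mapS_congr fun j => thinD _ _ (hWA _) (hy j)) (.symm (.functS _ _))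
  have l4 : DEq (.mapS b') (.comp (.mapS (vecD Φ.πR sy i Z DTerm.f)) (.mapS b0)) :=
    .trans (.mapS_congr fun j => thinD _ _ (hWA' _) (hy j)) (.symm (.functS _ _))
  have reassoc : ∀ {V1 V2 V3 V4 V5 V6 : DObj m n p} (g1 : DTerm Φ Ψ V1 V2)
      (g2 : DTerm Φ Ψ V2 V3) (g3 : DTerm Φ Ψ V3 V4) (g4 : DTerm Φ Ψ V4 V5)
      (g5 : DTerm Φ Ψ V5 V6),
      DEq (.comp (.comp g1 g2) (.comp g3 (.comp g4 g5)))
        (.comp g1 (.comp (.comp g2 (.comp g3 g4)) g5)) := by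
    intro V1 V2 V3 V4 V5 V6 g1 g2 g3 g4 g5
    refine (DEq.assoc _ _ _).trans (.comp_congr (.refl _) ?_)
    exact .symm ((DEq.assoc _ _ _).trans (.comp_congr (.refl _) (.assoc _ _ _)))
  refine (DEq.comp_congr l1 (.comp_congr (.refl _) l3)).trans ?_
  refine .trans ?_ (DEq.comp_congr l2 (.comp_congr (.refl _) l4)).symm
  exact (reassoc _ _ _ _ _).trans (e2.trans (reassoc _ _ _ _ _).symm)

theorem beta_move {x : Fin n → DObj m n p} {y : Fin p → DObj m n p}
    {Z : Fin Ψ.k → DObj m n p} (i : Fin Ψ.k) {W W' : Fin Ψ.k → DObj m n p}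
    (hW : W = updF Z i .C) (hW' : W' = updF Z i .A)
    (hx : ∀ i, AC (x i)) (hy : ∀ j, AC (y j)) (hWA : ∀ c, AC (W c)) (hWA' : ∀ c, AC (W' c))
    (a : ∀ i, DTerm Φ Ψ (dSrc (sy i) (x i) (W (Ψ.πL i))) (dTgt (sy i) (x i) (W (Ψ.πL i))))
    (b : ∀ j, DTerm Φ Ψ (dSrc (sz j) (W (Ψ.πR j)) (y j)) (dTgt (sz j) (W (Ψ.πR j)) (y j)))
    (a' : ∀ i, DTerm Φ Ψ (dSrc (sy i) (x i) (W' (Ψ.πL i))) (dTgt (sy i) (x i) (W' (Ψ.πL i))))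
    (b' : ∀ j, DTerm Φ Ψ (dSrc (sz j) (W' (Ψ.πR j)) (y j)) (dTgt (sz j) (W' (Ψ.πR j)) (y j)))
    (a0 : ∀ j, Nonempty (DTerm Φ Ψ (dSrc (sy j) (x j) (mixT Ψ.πL sy i Z .A .C j))
      (dTgt (sy j) (x j) (mixT Ψ.πL sy i Z .A .C j))))
    (b0 : ∀ j, Nonempty (DTerm Φ Ψ (dSrc (sz j) (mixT Ψ.πR sz i Z .C .A j) (y j))
      (dTgt (sz j) (mixT Ψ.πR sz i Z .C .A j) (y j)))) :
    DEq (.comp (.mapS a) (.comp (.beta W) (.mapR b)))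
      (.comp (.mapS a') (.comp (.beta W') (.mapR b'))) := by
  subst hW hW'
  replace a0 := fun j => Classical.choice (a0 j)
  replace b0 := fun j => Classical.choice (b0 j)
  have e := DEq.betaEq (Φ := Φ) i Z (DTerm.f)
  have e2 := DEq.comp_congr (.refl (.mapS a0)) (DEq.comp_congr e (.refl (.mapR b0)))
  have l1 : DEq (.mapS a) (.comp (.mapS a0) (.mapS (vecA Ψ.πL sy i Z DTerm.f))) :=
    .trans (.mapS_congr fun j => thinD _ _ (hx j) (hWA _)) (.symm (.functS _ _))
  have l2 : DEq (.mapS a') (.comp (.mapS a0) (.mapS (vecC Ψ.πL sy i Z DTerm.f))) :=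
    .trans (.mapS_congr fun j => thinD _ _ (hx j) (hWA' _)) (.symm (.functS _ _))
  have l3 : DEq (.mapR b) (.comp (.mapR (vecB Ψ.πR sz i Z DTerm.f)) (.mapR b0)) :=
    .trans (.mapR_congr fun j => thinD _ _ (hWA _) (hy j)) (.symm (.functR _ _))
  have l4 : DEq (.mapR b') (.comp (.mapR (vecD Ψ.πR sz i Z DTerm.f)) (.mapR b0)) :=
    .trans (.mapR_congr fun j => thinD _ _ (hWA' _) (hy j)) (.symm (.functR _ _))
  have reassoc : ∀ {V1 V2 V3 V4 V5 V6 : DObj m n p} (g1 : DTerm Φ Ψ V1 V2)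
      (g2 : DTerm Φ Ψ V2 V3) (g3 : DTerm Φ Ψ V3 V4) (g4 : DTerm Φ Ψ V4 V5)
      (g5 : DTerm Φ Ψ V5 V6),
      DEq (.comp (.comp g1 g2) (.comp g3 (.comp g4 g5)))
        (.comp g1 (.comp (.comp g2 (.comp g3 g4)) g5)) := by
    intro V1 V2 V3 V4 V5 V6 g1 g2 g3 g4 g5
    refine (DEq.assoc _ _ _).trans (.comp_congr (.refl _) ?_)
    exact .symm ((DEq.assoc _ _ _).trans (.comp_congr (.refl _) (.assoc _ _ _)))
  refine (DEq.comp_congr l1 (.comp_congr (.refl _) l3)).trans ?_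
  refine .trans ?_ (DEq.comp_congr l2 (.comp_congr (.refl _) l4)).symm
  exact (reassoc _ _ _ _ _).trans (e2.trans (reassoc _ _ _ _ _).symm)

theorem boolObj_upd {k : ℕ} (X : Fin k → Bool) (i : Fin k) :
    (fun c => (boolObj (Function.update X i false c) : DObj m n p)) =
      updF (fun c => boolObj (X c)) i .A := by
  funext c
  by_cases h : c = i
  · subst h; simp [updF, boolObj]
  · simp [updF, h]

theorem boolObj_self {k : ℕ} (X : Fin k → Bool) (i : Fin k) (hi : X i = true) :
    (fun c => (boolObj (X c) : DObj m n p)) = updF (fun c => boolObj (X c)) i .C := by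
  funext c
  by_cases h : c = i
  · subst h; simp [updF, boolObj, hi]
  · simp [updF, h]

theorem nonempty_id (b : Bool) {X Y : DObj m n p} (h : X = Y) :
    Nonempty (DTerm Φ Ψ (dSrc b X Y) (dTgt b X Y)) := by
  subst h; exact ⟨dId X b⟩

theorem DStep.toDEq {z z' : MZ Φ Ψ} (H : DStep z z') : DEq z.toTerm z'.toTerm := by
  cases H with
  | alphaStep i hi hg hh hX hY =>
    obtain ⟨X, Y, cz⟩ := z
    obtain ⟨X', Y', cz'⟩ := z'
    dsimp only at hi hX hY
    subst hX hY
    have key := alpha_move (Ψ := Ψ) i (boolObj_self X i hi) (boolObj_upd X i)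
      (x := fun i => cond (sx i) DObj.A DObj.C) (y := fun j => boolObj (Y' (Ψ.πL j)))
      (fun _ => AC_cond _ AC_A AC_C) (fun _ => AC_boolObj _) (fun _ => AC_boolObj _)
      (fun _ => AC_boolObj _) (gTm ⟨X, Y', cz⟩) (hTm ⟨X, Y', cz⟩) (gTm ⟨_, Y', cz'⟩)
      (hTm ⟨_, Y', cz'⟩)
      (by
        intro j
        by_cases h : Φ.πL j = i
        · apply nonempty_id; simp [mixT, h]
        · have := gTm ⟨X, Y', cz⟩ j
          simp only [mixT, if_neg h]
          exact ⟨this⟩)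
      (by
        intro j
        by_cases h : Φ.πR j = i
        · apply nonempty_id
          cases hs : sy j
          · have := hh j hs h
            cases hy : Y' (Ψ.πL j) <;> simp_all [mixT, MZ.h, boolObj]
          · have := (cz j).1 hs
            cases hy : Y' (Ψ.πL j) <;> simp_all [mixT, boolObj]
        · have := hTm ⟨X, Y', cz⟩ j
          simp only [mixT, if_neg h]
          exact ⟨this⟩)
    have e2 := DEq.comp_congr key
      (.refl (.comp (.beta fun c => boolObj (Y' c)) (.mapR (tTm ⟨X, Y', cz⟩))))
    have reassoc : ∀ {V1 V2 V3 V4 V5 : DObj m n p} (g1 : DTerm Φ Ψ V1 V2)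
      (g2 : DTerm Φ Ψ V2 V3) (g3 : DTerm Φ Ψ V3 V4) (g4 : DTerm Φ Ψ V4 V5),
      DEq (.comp g1 (.comp g2 (.comp g3 g4))) (.comp (.comp g1 (.comp g2 g3)) g4) := by
      intro V1 V2 V3 V4 V5 g1 g2 g3 g4
      exact .symm ((DEq.assoc _ _ _).trans (.comp_congr (.refl _) (.assoc _ _ _)))
    exact (reassoc _ _ _ _).trans (e2.trans (reassoc _ _ _ _).symm)
  | betaStep i hi hh ht hY hX =>
    obtain ⟨X, Y, cz⟩ := z
    obtain ⟨X', Y', cz'⟩ := z'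
    dsimp only at hi hX hY
    subst hX hY
    have key := beta_move (Φ := Φ) i (boolObj_self Y i hi) (boolObj_upd Y i)
      (x := fun j => boolObj (X' (Φ.πR j))) (y := fun l => cond (sz l) DObj.C DObj.A)
      (fun _ => AC_boolObj _) (fun _ => AC_cond _ AC_C AC_A) (fun _ => AC_boolObj _)
      (fun _ => AC_boolObj _) (hTm ⟨X', Y, cz⟩) (tTm ⟨X', Y, cz⟩) (hTm ⟨X', _, cz'⟩)
      (tTm ⟨X', _, cz'⟩)
      (by
        intro j
        by_cases h : Ψ.πL j = i
        · apply nonempty_id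
          cases hs : sy j
          · have := (cz j).2 hs
            cases hy : X' (Φ.πR j) <;> simp_all [mixT, boolObj]
          · have := hh j hs h
            cases hy : X' (Φ.πR j) <;> simp_all [mixT, MZ.h, boolObj]
        · have := hTm ⟨X', Y, cz⟩ j
          simp only [mixT, if_neg h]
          exact ⟨this⟩)
      (by
        intro j
        by_cases h : Ψ.πR j = i
        · apply nonempty_id; simp [mixT, h]
        · have := tTm ⟨X', Y, cz⟩ j
          simp only [mixT, if_neg h]
          exact ⟨this⟩)
    exact .comp_congr (.refl _) (.comp_congr (.refl _) key)

theorem dSteps_toDEq {z z' : MZ Φ Ψ} (H : Relation.ReflTransGen DStep z z') :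
    DEq z.toTerm z'.toTerm := by
  induction H with
  | refl => exact .refl _
  | tail _ hs ih => exact ih.trans hs.toDEq

/-! #### An invariant of `DEq` -/

def ob : DObj m n p → Bool
  | .C => true
  | _ => false

theorem ob_mono {X Y : DObj m n p} (g : DTerm Φ Ψ X Y) : ob X = true → ob Y = true := by
  induction g with
  | f => intro h; rfl
  | id X => exact id
  | comp g h ih1 ih2 => exact fun h => ih2 (ih1 h)
  | alpha W => intro h; cases h
  | beta W => intro h; cases h
  | mapT a => intro h; cases h
  | mapS a => intro h; cases h
  | mapR a => intro h; cases h

/-- `x ≤ y` or `y ≤ x` according to sign -/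
def cpt (b x y : Bool) : Prop :=
  (b = true → x = true → y = true) ∧ (b = false → y = true → x = true)

theorem cpt_refl (b x : Bool) : cpt b x x := ⟨fun _ h => h, fun _ h => h⟩

theorem cpt_trans {b x y z : Bool} (h : cpt b x y) (h' : cpt b y z) : cpt b x z :=
  ⟨fun e k => h'.1 e (h.1 e k), fun e k => h.2 e (h'.2 e k)⟩

theorem cpt_of_term {b : Bool} {X Y : DObj m n p}
    (g : DTerm Φ Ψ (dSrc b X Y) (dTgt b X Y)) : cpt b (ob X) (ob Y) := by
  cases b
  · exact ⟨(fun h => by cases h), fun _ => ob_mono g⟩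
  · exact ⟨fun _ => ob_mono g, fun h => by cases h⟩

abbrev St (Φ : GGraph m n gΦ sx sy) (Ψ : GGraph n p gΨ sy sz) :=
  (Fin Φ.k → Bool) × (Fin Ψ.k → Bool)

def ev : ∀ {X Y : DObj m n p}, DTerm Φ Ψ X Y → St Φ Ψ → St Φ Ψ
  | _, _, .comp g h => fun s => ev h (ev g s)
  | _, _, .alpha W => fun _ => (fun c => ob (W c), fun _ => false)
  | _, _, .beta W => fun s => (s.1, fun c => ob (W c))
  | _, _, _ => id

def Val (Φ : GGraph m n gΦ sx sy) (Ψ : GGraph n p gΨ sy sz) :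
    DObj m n p → St Φ Ψ → Prop
  | .S v => fun s => ∀ j, cpt (sy j) (s.1 (Φ.πR j)) (ob (v j))
  | .R v => fun s => (∀ j, cpt (sy j) (s.1 (Φ.πR j)) (s.2 (Ψ.πL j))) ∧
      ∀ l, cpt (sz l) (s.2 (Ψ.πR l)) (ob (v l))
  | _ => fun _ => True

def Near {k : ℕ} (X X' : Fin k → Bool) : Prop := ∃ i, ∀ c, c ≠ i → X c = X' c

def Stp (Φ : GGraph m n gΦ sx sy) (Ψ : GGraph n p gΨ sy sz) (V : DObj m n p)
    (s s' : St Φ Ψ) : Prop :=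
  Val Φ Ψ V s ∧ Val Φ Ψ V s' ∧
  match V with
  | .S _ => Near s.1 s'.1
  | .R _ => (Near s.1 s'.1 ∧ s.2 = s'.2) ∨ (s.1 = s'.1 ∧ Near s.2 s'.2)
  | _ => True

theorem ev_val {X Y : DObj m n p} (g : DTerm Φ Ψ X Y) (s : St Φ Ψ) (hs : Val Φ Ψ X s) :
    Val Φ Ψ Y (ev g s) := by
  induction g generalizing s with
  | f => trivial
  | id X => exact hs
  | comp g h ih1 ih2 => exact ih2 _ (ih1 _ hs)
  | alpha W => exact fun j => cpt_refl _ _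
  | beta W => exact ⟨hs, fun l => cpt_refl _ _⟩
  | mapT a => trivial
  | mapS a => exact fun j => cpt_trans (hs j) (cpt_of_term (a j))
  | mapR a => exact ⟨hs.1, fun j => cpt_trans (hs.2 j) (cpt_of_term (a j))⟩

abbrev Rl (Φ : GGraph m n gΦ sx sy) (Ψ : GGraph n p gΨ sy sz) (V : DObj m n p) :=
  Relation.EqvGen (Stp Φ Ψ V)

theorem eqvGen_lift {α β : Type*} {r : α → α → Prop} {q : β → β → Prop} (F : α → β)
    (H : ∀ a b, r a b → Relation.EqvGen q (F a) (F b)) {a b : α}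
    (h : Relation.EqvGen r a b) : Relation.EqvGen q (F a) (F b) := by
  induction h with
  | rel _ _ h => exact H _ _ h
  | refl _ => exact .refl _
  | symm _ _ _ ih => exact .symm _ _ ih
  | trans _ _ _ _ _ ih1 ih2 => exact .trans _ _ _ ih1 ih2

theorem ev_step {X Y : DObj m n p} (g : DTerm Φ Ψ X Y) (s s' : St Φ Ψ)
    (hs : Stp Φ Ψ X s s') : Rl Φ Ψ Y (ev g s) (ev g s') := by
  induction g generalizing s s' with
  | f => exact .rel _ _ ⟨trivial, trivial, trivial⟩
  | id X => exact .rel _ _ hs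
  | comp g h ih1 ih2 => exact eqvGen_lift (ev h) ih2 (ih1 _ _ hs)
  | alpha W => exact .refl _
  | beta W =>
    exact .rel _ _ ⟨ev_val _ _ hs.1, ev_val _ _ hs.2.1, .inl ⟨hs.2.2, rfl⟩⟩
  | mapT a => exact .rel _ _ ⟨trivial, trivial, trivial⟩
  | mapS a =>
    exact .rel _ _ ⟨ev_val (.mapS a) _ hs.1, ev_val (.mapS a) _ hs.2.1, hs.2.2⟩
  | mapR a =>
    exact .rel _ _ ⟨ev_val (.mapR a) _ hs.1, ev_val (.mapR a) _ hs.2.1, hs.2.2⟩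

theorem near_upd {k : ℕ} (Z : Fin k → DObj m n p) (i : Fin k) (X Y : DObj m n p) :
    Near (fun c => ob (updF Z i Y c)) (fun c => ob (updF Z i X c)) :=
  ⟨i, fun c hc => by simp [updF, hc]⟩

theorem DEq.inv {X Y : DObj m n p} {g h : DTerm Φ Ψ X Y} (H : DEq g h) (s : St Φ Ψ)
    (hs : Val Φ Ψ X s) : Rl Φ Ψ Y (ev g s) (ev h s) := by
  induction H generalizing s with
  | refl g => exact .refl _
  | symm _ ih => exact .symm _ _ (ih s hs)
  | trans _ _ ih1 ih2 => exact .trans _ _ _ (ih1 s hs) (ih2 s hs)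
  | @comp_congr _ _ _ g g' h h' _ _ ih1 ih2 =>
    exact .trans _ _ _ (eqvGen_lift (ev h) (ev_step h) (ih1 s hs)) (ih2 _ (ev_val g' s hs))
  | mapT_congr _ _ => exact .refl _
  | mapS_congr _ _ => exact .refl _
  | mapR_congr _ _ => exact .refl _
  | id_left g => exact .refl _
  | id_right g => exact .refl _
  | assoc g h t => exact .refl _
  | functT a b => exact .refl _
  | functS a b => exact .refl _
  | functR a b => exact .refl _
  | functT_id X => exact .refl _
  | functS_id X => exact .refl _
  | functR_id X => exact .refl _
  | alphaEq i Z t =>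
    exact .rel _ _ ⟨ev_val _ _ hs, ev_val _ _ hs, near_upd _ _ _ _⟩
  | betaEq i Z t =>
    exact .rel _ _ ⟨ev_val _ _ hs, ev_val _ _ hs, .inr ⟨rfl, near_upd _ _ _ _⟩⟩

/-! #### From the invariant to D reduction -/

def toMZ (s : St Φ Ψ) (h : Val Φ Ψ (RCA sz) s) : MZ Φ Ψ where
  Xv := s.1
  Yv := s.2
  compat j := by
    have := h.1 j
    refine ⟨fun e k => ?_, fun e k => ?_⟩
    · have := this.1 e k.1; simp_all
    · have := this.2 e k.1; simp_all

theorem MZ.ext' {z z' : MZ Φ Ψ} (h1 : z.Xv = z'.Xv) (h2 : z.Yv = z'.Yv) : z = z' := by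
  cases z; cases z'; simp_all

theorem MZ.val (z : MZ Φ Ψ) : Val Φ Ψ (RCA sz) (z.Xv, z.Yv) := by
  refine ⟨fun j => ⟨fun e k => ?_, fun e k => ?_⟩, fun l => ⟨fun e k => ?_, fun e k => ?_⟩⟩
  · have := (z.compat j).1 e; simp_all
  · have := (z.compat j).2 e; simp_all
  · simp [e, ob]
  · simp [e, ob] at k

theorem near_cases {k : ℕ} {X X' : Fin k → Bool} (h : Near X X') :
    X = X' ∨ (∃ i, X i = true ∧ X' = Function.update X i false) ∨
      (∃ i, X' i = true ∧ X = Function.update X' i false) := by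
  obtain ⟨i, hi⟩ := h
  cases h1 : X i <;> cases h2 : X' i
  · left; funext c; by_cases hc : c = i
    · subst hc; simp_all
    · exact hi c hc
  · right; right; refine ⟨i, h2, ?_⟩; funext c; by_cases hc : c = i
    · subst hc; simp_all
    · simp [hc, hi c hc]
  · right; left; refine ⟨i, h1, ?_⟩; funext c; by_cases hc : c = i
    · subst hc; simp_all
    · simp [hc, hi c hc]
  · left; funext c; by_cases hc : c = i
    · subst hc; simp_all
    · exact hi c hc

theorem alpha_step_of {z z' : MZ Φ Ψ} (i : Fin Φ.k) (hi : z.Xv i = true)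
    (hX : z'.Xv = Function.update z.Xv i false) (hY : z'.Yv = z.Yv) : DStep z z' := by
  refine .alphaStep z z' i hi ?_ ?_ hX hY
  · intro j hs hj; simp [MZ.g, hs, hj, hi]
  · intro j hs hj
    have := (z'.compat j).2 hs
    simp_all [MZ.h]

theorem beta_step_of {z z' : MZ Φ Ψ} (i : Fin Ψ.k) (hi : z.Yv i = true)
    (hY : z'.Yv = Function.update z.Yv i false) (hX : z'.Xv = z.Xv) : DStep z z' := by
  refine .betaStep z z' i hi ?_ ?_ hY hX
  · intro j hs hj
    have := (z'.compat j).1 hs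
    simp_all [MZ.h]
  · intro j hs hj; simp [MZ.t, hs, hj, hi]

theorem stp_toEqv {s s' : St Φ Ψ} (h : Stp Φ Ψ (RCA sz) s s') :
    Relation.EqvGen DStep (toMZ s h.1) (toMZ s' h.2.1) := by
  rcases h with ⟨h1, h2, (⟨hn, he⟩ | ⟨he, hn⟩)⟩
  · rcases near_cases hn with e | ⟨i, hi, e⟩ | ⟨i, hi, e⟩
    · rw [MZ.ext' (z := toMZ s h1) (z' := toMZ s' h2) e he]; exact .refl _
    · exact .rel _ _ (alpha_step_of i hi e he.symm)
    · exact .symm _ _ (.rel _ _ (alpha_step_of i hi e he))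
  · rcases near_cases hn with e | ⟨i, hi, e⟩ | ⟨i, hi, e⟩
    · rw [MZ.ext' (z := toMZ s h1) (z' := toMZ s' h2) he e]; exact .refl _
    · exact .rel _ _ (beta_step_of i hi e he.symm)
    · exact .symm _ _ (.rel _ _ (beta_step_of i hi e he))

theorem rl_toEqv {s s' : St Φ Ψ} (h : Rl Φ Ψ (RCA sz) s s') :
    ∀ (_ : Val Φ Ψ (RCA sz) s ∨ Val Φ Ψ (RCA sz) s'), ∃ (h1 : Val Φ Ψ (RCA sz) s)
      (h2 : Val Φ Ψ (RCA sz) s'), Relation.EqvGen DStep (toMZ s h1) (toMZ s' h2) := by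
  induction h with
  | rel _ _ h => exact fun _ => ⟨h.1, h.2.1, stp_toEqv h⟩
  | refl _ => exact fun h => ⟨h.elim id id, h.elim id id, .refl _⟩
  | symm _ _ _ ih =>
    intro h
    obtain ⟨a, b, c⟩ := ih h.symm
    exact ⟨b, a, .symm _ _ c⟩
  | trans _ _ _ _ _ ih1 ih2 =>
    intro h
    rcases h with h | h
    · obtain ⟨a, b, c⟩ := ih1 (.inl h)
      obtain ⟨a', b', c'⟩ := ih2 (.inl b)
      exact ⟨a, b', .trans _ _ _ c c'⟩
    · obtain ⟨a, b, c⟩ := ih2 (.inr h)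
      obtain ⟨a', b', c'⟩ := ih1 (.inr a)
      exact ⟨a', b, .trans _ _ _ c' c⟩

theorem ob_boolObj (b : Bool) : ob (boolObj b : DObj m n p) = b := by
  cases b <;> rfl

theorem ev_toTerm (z : MZ Φ Ψ) (s : St Φ Ψ) : ev z.toTerm s = (z.Xv, z.Yv) := by
  show ((fun c => ob (boolObj (z.Xv c) : DObj m n p), fun c => ob (boolObj (z.Yv c) : DObj m n p)) :
    St Φ Ψ) = _
  simp only [ob_boolObj]

theorem eqv_of_DEq {z z' : MZ Φ Ψ} (h : DEq z.toTerm z'.toTerm) :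
    Relation.EqvGen DStep z z' := by
  have := h.inv (fun _ => false, fun _ => false) trivial
  rw [ev_toTerm, ev_toTerm] at this
  obtain ⟨_, _, e⟩ := rl_toEqv this (.inl z.val)
  exact e

/-! #### Confluence of D reduction -/

/-- the two kinds of D steps, in terms of the component vectors -/
theorem dstep_inv {z z' : MZ Φ Ψ} (h : DStep z z') :
    (∃ i, z.Xv i = true ∧ z'.Xv = Function.update z.Xv i false ∧ z'.Yv = z.Yv) ∨
    (∃ i, z.Yv i = true ∧ z'.Yv = Function.update z.Yv i false ∧ z'.Xv = z.Xv) := by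
  cases h with
  | alphaStep i hi _ _ hX hY => exact .inl ⟨i, hi, hX, hY⟩
  | betaStep i hi _ _ hY hX => exact .inr ⟨i, hi, hY, hX⟩

/-- meet of two coterminal reducts -/
def MZ.meet (z z' : MZ Φ Ψ) : MZ Φ Ψ where
  Xv c := z.Xv c && z'.Xv c
  Yv c := z.Yv c && z'.Yv c
  compat j := by
    have h1 := z.compat j
    have h2 := z'.compat j
    refine ⟨fun e => ?_, fun e => ?_⟩
    · have h1 := h1.1 e
      have h2 := h2.1 e
      simp_all
    · have h1 := h1.2 e
      have h2 := h2.2 e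
      simp_all

theorem meet_comm (z z' : MZ Φ Ψ) : z.meet z' = z'.meet z :=
  MZ.ext' (funext fun _ => Bool.and_comm _ _) (funext fun _ => Bool.and_comm _ _)

theorem upd_and {k : ℕ} {X Y : Fin k → Bool} {i : Fin k} (h : ∀ c, Y c = true → X c = true) :
    (fun c => Y c && Function.update X i false c) = Function.update Y i false := by
  funext c
  by_cases hc : c = i
  · subst hc; simp
  · have := h c
    cases hY : Y c <;> simp_all

theorem dstep_le {z z' : MZ Φ Ψ} (h : DStep z z') :
    (∀ c, z'.Xv c = true → z.Xv c = true) ∧ (∀ c, z'.Yv c = true → z.Yv c = true) := by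
  have aux : ∀ {k : ℕ} (X : Fin k → Bool) (i c : Fin k),
      Function.update X i false c = true → X c = true := by
    intro k X i c
    by_cases hc : c = i
    · subst hc; simp
    · simp [hc]
  rcases dstep_inv h with ⟨i, hi, hX, hY⟩ | ⟨i, hi, hY, hX⟩
  · rw [hX, hY]; exact ⟨fun c => aux _ _ _, fun _ h => h⟩
  · rw [hX, hY]; exact ⟨fun _ h => h, fun c => aux _ _ _⟩

theorem and_absorb {k : ℕ} {X Y : Fin k → Bool} (h : ∀ c, Y c = true → X c = true) :
    (fun c => Y c && X c) = Y := by
  funext c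
  have := h c
  cases hY : Y c <;> simp_all

theorem update_idem {k : ℕ} (Y : Fin k → Bool) (i : Fin k) (h : Y i = false) :
    Function.update Y i false = Y := by
  rw [← h]; exact Function.update_eq_self i Y

/-- parallel reducts meet -/
theorem step_meet {z a b : MZ Φ Ψ} (ha : DStep z a) (hb : DStep z b) :
    Relation.ReflGen DStep b (b.meet a) := by
  have lb := dstep_le hb
  rcases dstep_inv ha with ⟨i, hi, hX, hY⟩ | ⟨i, hi, hY, hX⟩
  · have e1 : (b.meet a).Xv = Function.update b.Xv i false := by
      show (fun c => b.Xv c && a.Xv c) = _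
      rw [hX]; exact upd_and lb.1
    have e2 : (b.meet a).Yv = b.Yv := by
      show (fun c => b.Yv c && a.Yv c) = _
      rw [hY]; exact and_absorb lb.2
    cases hbi : b.Xv i
    · rw [update_idem _ _ hbi] at e1
      rw [MZ.ext' e1 e2]
    · exact .single (alpha_step_of i hbi e1 e2)
  · have e1 : (b.meet a).Yv = Function.update b.Yv i false := by
      show (fun c => b.Yv c && a.Yv c) = _
      rw [hY]; exact upd_and lb.2
    have e2 : (b.meet a).Xv = b.Xv := by
      show (fun c => b.Xv c && a.Xv c) = _
      rw [hX]; exact and_absorb lb.1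
    cases hbi : b.Yv i
    · rw [update_idem _ _ hbi] at e1
      rw [MZ.ext' e2 e1]
    · exact .single (beta_step_of i hbi e1 e2)

theorem dstep_cr {a b c : MZ Φ Ψ} (hab : Relation.ReflTransGen DStep a b)
    (hac : Relation.ReflTransGen DStep a c) :
    Relation.Join (Relation.ReflTransGen DStep) b c := by
  refine Relation.church_rosser ?_ hab hac
  intro x y z hy hz
  refine ⟨y.meet z, step_meet hz hy, ?_⟩
  rw [meet_comm]
  exact (step_meet hy hz).to_reflTransGen

theorem eqv_join {a b : MZ Φ Ψ} (h : Relation.EqvGen DStep a b) :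
    Relation.Join (Relation.ReflTransGen DStep) a b := by
  induction h with
  | rel _ _ h => exact ⟨_, .single h, .refl⟩
  | refl _ => exact ⟨_, .refl, .refl⟩
  | symm _ _ _ ih => obtain ⟨d, h1, h2⟩ := ih; exact ⟨d, h2, h1⟩
  | trans _ _ _ _ _ ih1 ih2 =>
    obtain ⟨d, h1, h2⟩ := ih1
    obtain ⟨e, h3, h4⟩ := ih2
    obtain ⟨f, h5, h6⟩ := dstep_cr h2 h3
    exact ⟨f, h1.trans h5, h4.trans h6⟩

theorem normal_eq {a b : MZ Φ Ψ} (ha : DNormal a) (h : Relation.ReflTransGen DStep a b) :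
    a = b := by
  rcases Relation.ReflTransGen.cases_head h with h | ⟨c, hc, _⟩
  · exact h
  · exact absurd ⟨c, hc⟩ ha

end Helpers

/-- Theorem 2.1 of the paper.  Equality in `ℳ` is decidable: for
all morphism terms `g₁`, `g₂` in `ℳ`, the equation `g₁ = g₂` is derivable from the
`𝒦_{Φ,Ψ}`-equations if and only if `D(CF(g₁)) ≡ D(CF(g₂))`, where `CF(g)` is the
(unique) `CF` normal form of `g` and `D(h)` the (unique) `D` normal form of `h`.
(The right-hand side is manifestly decidable, both normal forms being effectively
computable; here `CF(gₐ)` is represented by a term `zₐ` of `ℳ₀` and `D(zₐ)` by its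
`D` normal form `wₐ`.) -/
theorem M_eq_decidable
    {m n p gΦ gΨ : ℕ} {sx : Fin m → Bool} {sy : Fin n → Bool} {sz : Fin p → Bool}
    {Φ : GGraph m n gΦ sx sy} {Ψ : GGraph n p gΨ sy sz}
    (g₁ g₂ : DTerm Φ Ψ (TAC sx) (RCA sz)) (h₁ : InM g₁) (h₂ : InM g₂)
    (z₁ z₂ : MZ Φ Ψ) (hz₁ : ReprCF g₁ z₁) (hz₂ : ReprCF g₂ z₂)
    (w₁ w₂ : MZ Φ Ψ)
    (hw₁ : Relation.ReflTransGen DStep z₁ w₁) (hn₁ : DNormal w₁)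
    (hw₂ : Relation.ReflTransGen DStep z₂ w₂) (hn₂ : DNormal w₂) :
    DEq g₁ g₂ ↔ w₁ = w₂ := by
  have e₁ : DEq g₁ w₁.toTerm := hz₁.toDEq.trans (dSteps_toDEq hw₁)
  have e₂ : DEq g₂ w₂.toTerm := hz₂.toDEq.trans (dSteps_toDEq hw₂)
  constructor
  · intro h
    obtain ⟨d, h1, h2⟩ := eqv_join (eqv_of_DEq (e₁.symm.trans (h.trans e₂)))
    exact (normal_eq hn₁ h1).trans (normal_eq hn₂ h2).symm
  · rintro rfl
    exact e₁.trans e₂.symm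

end GDin
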